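/- arXiv:2301.12027 — 4 statements merged into one kernel-verified Lean document; each statement's English description precedes it below -/
import Mathlib

section
/- Let p ∈ (0,1), let (x̄,t̄) ∈ ℝ² with t̄ < |x̄|^p, and let (x*,t*) be an optimal solution of the projection problem, i.e., |x*|^p ≤ t* and (t*−t̄)² + (x*−x̄)² ≤ (t−t̄)² + (x−x̄)² for all (x,t) ∈ ℝ² with |x|^p ≤ t. Then x* has the same sign as x̄ or is zero, i.e., x*·x̄ ≥ 0. -/
/-- Proposition 1(a): if `t̄ < |x̄|^p` and `(xs, ts)` minimizes
`g(x,t) = (t - t̄)^2 + (x - x̄)^2` over the epigraph `{(x,t) : |x|^p ≤ t}`,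
then `xs` has the same sign as `x̄` (or is zero), i.e. `xs * x̄ ≥ 0`. -/
theorem prop1a (p xbar tbar xs ts : ℝ)
    (hp0 : 0 < p) (hp1 : p < 1)
    (hout : tbar < |xbar| ^ p)
    (hfeas : |xs| ^ p ≤ ts)
    (hopt : ∀ x t : ℝ, |x| ^ p ≤ t →
      (ts - tbar) ^ 2 + (xs - xbar) ^ 2 ≤ (t - tbar) ^ 2 + (x - xbar) ^ 2) :
    xs * xbar ≥ 0 := by
  have h := hopt (-xs) ts (by rwa [abs_neg])
  nlinarith [h]
end

section
/- Let p ∈ (0,1), let (x̄,t̄) ∈ ℝ² with t̄ < |x̄|^p, and let (x*,t*) be an optimal solution of the projection problem, i.e., |x*|^p ≤ t* and (t*−t̄)² + (x*−x̄)² ≤ (t−t̄)² + (x−x̄)² for all (x,t) ∈ ℝ² with |x|^p ≤ t. Then |x*|^p ≥ t̄. -/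
/-- Proposition 1(c): if `t̄ < |x̄|^p` and `(xs, ts)` minimizes
`g(x,t) = (t - t̄)^2 + (x - x̄)^2` over the epigraph `{(x,t) : |x|^p ≤ t}`,
then `|xs|^p ≥ t̄`. -/
theorem prop1c (p xbar tbar xs ts : ℝ)
    (hp0 : 0 < p) (hp1 : p < 1)
    (hout : tbar < |xbar| ^ p)
    (hfeas : |xs| ^ p ≤ ts)
    (hopt : ∀ x t : ℝ, |x| ^ p ≤ t →
      (ts - tbar) ^ 2 + (xs - xbar) ^ 2 ≤ (t - tbar) ^ 2 + (x - xbar) ^ 2) :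
    |xs| ^ p ≥ tbar := by
  by_contra hlt
  have hlt : |xs| ^ p < tbar := not_le.mp hlt
  have hc : Continuous (fun s : ℝ => |xs + s * (xbar - xs)| ^ p) := by
    refine Continuous.rpow_const (by fun_prop) (fun _ => Or.inr hp0.le)
  have hivt := intermediate_value_Icc (zero_le_one (α := ℝ)) hc.continuousOn
  obtain ⟨s, ⟨hs0, hs1⟩, hs⟩ := hivt (show tbar ∈ _ from by
    constructor
    · simpa using hlt.le
    · simpa using hout.le)
  simp only at hs
  have hs0' : 0 < s := by
    rcases hs0.eq_or_lt with h | h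
    · rw [← h] at hs
      simp at hs
      linarith
    · exact h
  have hne : xs - xbar ≠ 0 := by
    intro h
    have : xs = xbar := by linarith
    rw [this] at hlt
    linarith
  have h := hopt _ tbar hs.le
  have hpos : 0 < (xs - xbar) ^ 2 := by positivity
  have h2 : (xs + s * (xbar - xs) - xbar) ^ 2 = (1 - s) ^ 2 * (xs - xbar) ^ 2 := by ring
  rw [h2] at h
  have h3 : (1 - s) ^ 2 < 1 := by nlinarith
  nlinarith [sq_nonneg (ts - tbar), mul_lt_mul_of_pos_right h3 hpos]
end

section
/- Let p ∈ (0,1), let (x̄,t̄) ∈ ℝ² with t̄ < |x̄|^p, and let (x*,t*) be an optimal solution of the projection problem, i.e., |x*|^p ≤ t* and (t*−t̄)² + (x*−x̄)² ≤ (t−t̄)² + (x−x̄)² for all (x,t) ∈ ℝ² with |x|^p ≤ t. Then x* is a global minimizer of the one-dimensional function h(x) = (|x|^p − t̄)² + (x − x̄)² over ℝ, and t* = |x*|^p. -/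
/-- Reduction of the 2-D projection problem to the scalar problem:
if `t̄ < |x̄|^p` and `(xs, ts)` minimizes `g(x,t) = (t - t̄)^2 + (x - x̄)^2`
over the epigraph `{(x,t) : |x|^p ≤ t}`, then `xs` is a global minimizer of
`h(x) = (|x|^p - t̄)^2 + (x - x̄)^2` over `ℝ`, and `ts = |xs|^p`. -/
theorem projection_reduces_to_scalar (p xbar tbar xs ts : ℝ)
    (hp0 : 0 < p) (hp1 : p < 1)
    (hout : tbar < |xbar| ^ p)
    (hfeas : |xs| ^ p ≤ ts)
    (hopt : ∀ x t : ℝ, |x| ^ p ≤ t →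
      (ts - tbar) ^ 2 + (xs - xbar) ^ 2 ≤ (t - tbar) ^ 2 + (x - xbar) ^ 2) :
    (∀ x : ℝ,
      (|xs| ^ p - tbar) ^ 2 + (xs - xbar) ^ 2 ≤ (|x| ^ p - tbar) ^ 2 + (x - xbar) ^ 2)
    ∧ ts = |xs| ^ p := by
  have key : ts = |xs| ^ p := by
    by_contra hne
    have hlt : |xs| ^ p < ts := lt_of_le_of_ne hfeas (Ne.symm hne)
    have h1 : tbar ≤ ts := by
      by_contra h
      push Not at h
      have := hopt xs tbar (by linarith)
      nlinarith
    have h2 : ts ≤ tbar := by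
      by_contra h
      push Not at h
      have h3 := hopt xs (max (|xs| ^ p) tbar) (le_max_left _ _)
      have h4 : max (|xs| ^ p) tbar < ts := max_lt hlt h
      have h5 : tbar ≤ max (|xs| ^ p) tbar := le_max_right _ _
      nlinarith
    have he : ts = tbar := le_antisymm h2 h1
    subst he
    have hc : Continuous (fun s : ℝ => |xs + s * (xbar - xs)| ^ p) := by
      apply Continuous.rpow_const
      · fun_prop
      · intro x
        right
        exact hp0.le
    obtain ⟨s, ⟨hs0, hs1⟩, hs⟩ := intermediate_value_Icc (zero_le_one' ℝ) hc.continuousOn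
      (show ts ∈ Set.Icc _ _ from ⟨by simpa using hfeas, by simpa using hout.le⟩)
    have hs' : |xs + s * (xbar - xs)| ^ p = ts := hs
    have hspos : 0 < s := by
      rcases hs0.eq_or_lt with h | h
      · rw [← h] at hs'
        simp at hs'
        exact absurd hs'.symm hne
      · exact h
    have hx : xs - xbar ≠ 0 := by
      intro h
      have : xs = xbar := by linarith
      rw [this] at hlt
      linarith
    have hpos : 0 < (xs - xbar) ^ 2 := by positivity
    have h6 := hopt _ ts hs'.le
    have h7 : (xs + s * (xbar - xs) - xbar) ^ 2
        = (xs - xbar) ^ 2 - s * (2 - s) * (xs - xbar) ^ 2 := by ring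
    have h8 : 0 < s * (2 - s) * (xs - xbar) ^ 2 :=
      mul_pos (mul_pos hspos (by linarith)) hpos
    linarith
  refine ⟨fun x => ?_, key⟩
  rw [← key]
  exact hopt x _ le_rfl
end

section
/- Let L ≤ min(m,n), let P, U ∈ ℝ^{m×L} and Q, V ∈ ℝ^{n×L} satisfy PᵀP = QᵀQ = UᵀU = VᵀV = I_L, and let Σ, Δ ∈ ℝ^{L×L} be diagonal matrices whose diagonal entries are nonnegative and arranged in nonincreasing order. Then Tr(Q Σᵀ Pᵀ U Δ Vᵀ) ≤ Tr(Σᵀ Δ) = Σ_{i=1}^L σ_i δ_i, where σ_i and δ_i are the i-th diagonal entries of Σ and Δ. -/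
open Matrix

lemma vn_bessel {m L : ℕ} (U : Matrix (Fin m) (Fin L) ℝ) (hU : Uᵀ * U = 1) (p : Fin m → ℝ) :
    (Uᵀ *ᵥ p) ⬝ᵥ (Uᵀ *ᵥ p) ≤ p ⬝ᵥ p := by
  have h0 : 0 ≤ (p - U *ᵥ (Uᵀ *ᵥ p)) ⬝ᵥ (p - U *ᵥ (Uᵀ *ᵥ p)) :=
    Finset.sum_nonneg fun i _ => mul_self_nonneg _
  have h1 : ∀ c : Fin L → ℝ, p ⬝ᵥ (U *ᵥ c) = (Uᵀ *ᵥ p) ⬝ᵥ c := by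
    intro c
    rw [dotProduct_mulVec, mulVec_transpose]
  have h2 : ∀ c : Fin L → ℝ, (U *ᵥ c) ⬝ᵥ (U *ᵥ c) = c ⬝ᵥ c := by
    intro c
    rw [dotProduct_mulVec, ← mulVec_transpose, mulVec_mulVec, hU, one_mulVec]
  rw [sub_dotProduct, dotProduct_sub, dotProduct_sub, h2, dotProduct_comm (U *ᵥ (Uᵀ *ᵥ p)) p, h1] at h0
  linarith

lemma vn_row {m L : ℕ} (P U : Matrix (Fin m) (Fin L) ℝ) (hP : Pᵀ * P = 1) (hU : Uᵀ * U = 1)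
    (i : Fin L) : ∑ j, (Pᵀ * U) i j ^ 2 ≤ 1 := by
  have h := vn_bessel U hU (fun k => P k i)
  have h1 : (fun k => P k i) ⬝ᵥ (fun k => P k i) = 1 := by
    have := congrFun (congrFun hP i) i
    simpa [mul_apply, dotProduct] using this
  rw [h1] at h
  refine le_trans (le_of_eq ?_) h
  refine Finset.sum_congr rfl fun j _ => ?_
  have : (Uᵀ *ᵥ fun k => P k i) j = (Pᵀ * U) i j := by
    simp [mulVec, mul_apply, dotProduct, mul_comm]
  rw [this, sq]

lemma vn_col {m L : ℕ} (P U : Matrix (Fin m) (Fin L) ℝ) (hP : Pᵀ * P = 1) (hU : Uᵀ * U = 1)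
    (j : Fin L) : ∑ i, (Pᵀ * U) i j ^ 2 ≤ 1 := by
  refine le_trans (le_of_eq ?_) (vn_row U P hU hP j)
  refine Finset.sum_congr rfl fun i _ => ?_
  congr 1
  simp [mul_apply, mul_comm]

lemma vn_key (s d : ℕ → ℝ) (hs : Antitone s) (hd : Antitone d) (F : ℕ → ℝ)
    (hF : ∀ n, F (n + 1) = F n + (s n - s (n + 1)) * d n) (i j : ℕ) (hij : i ≤ j) :
    (s i - s j) * d j ≤ F j - F i ∧ F j - F i ≤ (s i - s j) * d i := by
  induction j, hij using Nat.le_induction with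
  | base => simp
  | succ j hij ih =>
    obtain ⟨h1, h2⟩ := ih
    have a := hs (Nat.le_succ j)
    have b := hd (Nat.le_succ j)
    have c := hd hij
    have e := hs hij
    simp only [Nat.succ_eq_add_one] at a b
    rw [hF]
    constructor
    · nlinarith [mul_nonneg (sub_nonneg.2 (a.trans e)) (sub_nonneg.2 b)]
    · nlinarith [mul_nonneg (sub_nonneg.2 a) (sub_nonneg.2 c)]

lemma vn_dual {L : ℕ} (σ δ : Fin L → ℝ) (hσ0 : ∀ i, 0 ≤ σ i) (hδ0 : ∀ i, 0 ≤ δ i)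
    (hσ : Antitone σ) (hδ : Antitone δ) :
    ∃ u : Fin L → ℝ, (∀ i, 0 ≤ u i) ∧ (∀ i, u i ≤ σ i * δ i) ∧
      ∀ i j, (σ i - σ j) * δ j ≤ u i - u j := by
  have ext : ∀ f : Fin L → ℝ, (∀ i, 0 ≤ f i) → Antitone f →
      ∃ g : ℕ → ℝ, Antitone g ∧ g L = 0 ∧ ∀ i : Fin L, g i = f i := by
    intro f h0 hf
    refine ⟨fun k => if h : k < L then f ⟨k, h⟩ else 0, ?_, by simp, by simp⟩
    intro a b hab
    dsimp only
    split_ifs with h1 h2 h2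
    · exact hf (by simpa using hab)
    · omega
    · exact h0 _
    · exact le_rfl
  obtain ⟨s, hs, hsL, hse⟩ := ext σ hσ0 hσ
  obtain ⟨d, hd, hdL, hde⟩ := ext δ hδ0 hδ
  obtain ⟨F, hF⟩ : ∃ F : ℕ → ℝ, ∀ n, F (n + 1) = F n + (s n - s (n + 1)) * d n :=
    ⟨fun n => ∑ k ∈ Finset.range n, (s k - s (k + 1)) * d k,
      fun n => Finset.sum_range_succ _ _⟩
  have key := vn_key s d hs hd F hF
  refine ⟨fun i => F L - F i, fun i => ?_, fun i => ?_, fun i j => ?_⟩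
  · have := (key i L i.2.le).1
    simpa [hdL] using this
  · have := (key i L i.2.le).2
    simpa [hsL, hse, hde] using this
  · dsimp only
    rw [← hse, ← hse, ← hde]
    rcases le_total (i : ℕ) j with h | h
    · linarith [(key i j h).1]
    · linarith [(key j i h).2]

lemma vn_sub {L : ℕ} (σ δ : Fin L → ℝ) (hσ0 : ∀ i, 0 ≤ σ i) (hδ0 : ∀ i, 0 ≤ δ i)
    (hσ : Antitone σ) (hδ : Antitone δ) (W : Fin L → Fin L → ℝ) (hW : ∀ i j, 0 ≤ W i j)
    (hr : ∀ i, ∑ j, W i j ≤ 1) (hc : ∀ j, ∑ i, W i j ≤ 1) :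
    ∑ i, ∑ j, σ i * δ j * W i j ≤ ∑ i, σ i * δ i := by
  obtain ⟨u, hu0, hu1, hu⟩ := vn_dual σ δ hσ0 hδ0 hσ hδ
  calc ∑ i, ∑ j, σ i * δ j * W i j
      ≤ ∑ i, ∑ j, (u i * W i j + (σ j * δ j - u j) * W i j) := by
        refine Finset.sum_le_sum fun i _ => Finset.sum_le_sum fun j _ => ?_
        rw [← add_mul]
        exact mul_le_mul_of_nonneg_right (by linarith [hu i j]) (hW i j)
    _ = ∑ i, u i * ∑ j, W i j + ∑ j, (σ j * δ j - u j) * ∑ i, W i j := by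
        simp only [Finset.sum_add_distrib, Finset.mul_sum]
        congr 1
        exact Finset.sum_comm
    _ ≤ ∑ i, u i + ∑ j, (σ j * δ j - u j) := by
        refine add_le_add (Finset.sum_le_sum fun i _ => ?_) (Finset.sum_le_sum fun j _ => ?_)
        · exact mul_le_of_le_one_right (hu0 i) (hr i)
        · exact mul_le_of_le_one_right (sub_nonneg.2 (hu1 j)) (hc j)
    _ = ∑ i, σ i * δ i := by
        rw [← Finset.sum_add_distrib]
        exact Finset.sum_congr rfl fun i _ => by ring

/-- von Neumann-type trace inequality: for semi-orthogonal `P, U ∈ ℝ^{m×L}`,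
`Q, V ∈ ℝ^{n×L}` and diagonal matrices `Σ = diagonal σ`, `Δ = diagonal δ` with
nonnegative, nonincreasing diagonal entries,
`Tr(Q Σᵀ Pᵀ U Δ Vᵀ) ≤ Tr(Σᵀ Δ) = Σᵢ σᵢ δᵢ`. -/
theorem von_neumann_trace_inequality (m n L : ℕ) (hLm : L ≤ m) (hLn : L ≤ n)
    (P U : Matrix (Fin m) (Fin L) ℝ) (Q V : Matrix (Fin n) (Fin L) ℝ)
    (hP : Pᵀ * P = 1) (hQ : Qᵀ * Q = 1) (hU : Uᵀ * U = 1) (hV : Vᵀ * V = 1)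
    (σ δ : Fin L → ℝ)
    (hσ0 : ∀ i, 0 ≤ σ i) (hδ0 : ∀ i, 0 ≤ δ i)
    (hσmono : Antitone σ) (hδmono : Antitone δ) :
    Matrix.trace (Q * (Matrix.diagonal σ)ᵀ * Pᵀ * U * Matrix.diagonal δ * Vᵀ)
      ≤ Matrix.trace ((Matrix.diagonal σ)ᵀ * Matrix.diagonal δ)
    ∧ Matrix.trace ((Matrix.diagonal σ)ᵀ * Matrix.diagonal δ)
      = ∑ i : Fin L, σ i * δ i := by
  have h2 : Matrix.trace ((Matrix.diagonal σ)ᵀ * Matrix.diagonal δ) = ∑ i : Fin L, σ i * δ i := by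
    simp [Matrix.trace_diagonal]
  refine ⟨?_, h2⟩
  rw [h2]
  have h3 : Matrix.trace (Q * (Matrix.diagonal σ)ᵀ * Pᵀ * U * Matrix.diagonal δ * Vᵀ)
      = ∑ i, ∑ j, σ i * δ j * ((Pᵀ * U) i j * (Qᵀ * V) i j) := by
    have e1 : Q * (Matrix.diagonal σ)ᵀ * Pᵀ * U * Matrix.diagonal δ * Vᵀ
        = Q * (Matrix.diagonal σ * (Pᵀ * U) * Matrix.diagonal δ * Vᵀ) := by
      simp only [Matrix.diagonal_transpose, Matrix.mul_assoc]
    have e2 : Matrix.diagonal σ * (Pᵀ * U) * Matrix.diagonal δ * Vᵀ * Q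
        = (Matrix.diagonal σ * (Pᵀ * U) * Matrix.diagonal δ) * (Qᵀ * V)ᵀ := by
      simp only [Matrix.transpose_mul, Matrix.transpose_transpose, Matrix.mul_assoc]
    rw [e1, Matrix.trace_mul_comm, e2]
    generalize Pᵀ * U = A
    generalize Qᵀ * V = B
    rw [Matrix.trace]
    refine Finset.sum_congr rfl fun i _ => ?_
    rw [Matrix.diag_apply, Matrix.mul_apply]
    refine Finset.sum_congr rfl fun j _ => ?_
    rw [Matrix.mul_diagonal, Matrix.diagonal_mul, Matrix.transpose_apply]
    ring
  rw [h3]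
  refine le_trans ?_ (vn_sub σ δ hσ0 hδ0 hσmono hδmono
    (fun i j => ((Pᵀ * U) i j ^ 2 + (Qᵀ * V) i j ^ 2) / 2) (fun i j => by positivity) ?_ ?_)
  · refine Finset.sum_le_sum fun i _ => Finset.sum_le_sum fun j _ => ?_
    refine mul_le_mul_of_nonneg_left ?_ (mul_nonneg (hσ0 i) (hδ0 j))
    nlinarith [sq_nonneg ((Pᵀ * U) i j - (Qᵀ * V) i j)]
  · intro i
    rw [← Finset.sum_div, Finset.sum_add_distrib]
    linarith [vn_row P U hP hU i, vn_row Q V hQ hV i]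
  · intro j
    rw [← Finset.sum_div, Finset.sum_add_distrib]
    linarith [vn_col P U hP hU j, vn_col Q V hQ hV j]
end
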